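/- arXiv:1910.03868 — 2 statements merged into one kernel-verified Lean document; each statement's English description precedes it below -/
import Mathlib

section
/- Let p be a prime, s ≥ 1, and G = (ℤ/pℤ)^s acting trivially on the field 𝔽_p. Then for every n ≥ 0, the cohomology group Hⁿ(G, 𝔽_p) is an 𝔽_p-vector space of dimension C(n+s−1, s−1). -/
open CategoryTheory

namespace ElemAb

section general
variable {k G : Type} [CommRing k] [IsDomain k] [IsNoetherianRing k] [Group G] [Finite G]

lemma finite_H (A : Rep.{0} k G) [Module.Finite k A.V] (n : ℕ) :
    Module.Finite k (groupCohomology A n) := by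
  have h1 : Module.Finite k ((groupCohomology.inhomogeneousCochains A).X n) :=
    inferInstanceAs (Module.Finite k ((Fin n → G) → A.V))
  have h2 : Module.Finite k (groupCohomology.cocycles A n) :=
    Module.Finite.of_injective (groupCohomology.iCocycles A n).hom
      ((ModuleCat.mono_iff_injective (groupCohomology.iCocycles A n)).1 inferInstance)
  exact Module.Finite.of_surjective (groupCohomology.π A n).hom
    (fun x => groupCohomology_induction_on x fun y => ⟨y, rfl⟩)

variable {X₁ X₂ X₃ : Rep.{0} k G} {f : X₁ ⟶ X₂} {g : X₂ ⟶ X₃} {w : f ≫ g = 0}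
  (hX : (ShortComplex.mk f g w).ShortExact)
include hX

lemma surj_of_zero (n : ℕ) (h : groupCohomology.map (MonoidHom.id G) g n = 0) :
    Function.Surjective (groupCohomology.map (MonoidHom.id G) f n).hom := by
  have e := (groupCohomology.mapShortComplex₂_exact hX n).moduleCat_range_eq_ker
  have e2 : LinearMap.range (groupCohomology.map (MonoidHom.id G) f n).hom =
    LinearMap.ker (groupCohomology.map (MonoidHom.id G) g n).hom := e
  rw [h] at e2
  rw [← LinearMap.range_eq_top, e2]
  simp

lemma zero_of_surj (n : ℕ) 
    (h : Function.Surjective (groupCohomology.map (MonoidHom.id G) f n).hom) :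
    groupCohomology.map (MonoidHom.id G) g n = 0 := by
  have e2 : LinearMap.range (groupCohomology.map (MonoidHom.id G) f n).hom =
    LinearMap.ker (groupCohomology.map (MonoidHom.id G) g n).hom := 
      (groupCohomology.mapShortComplex₂_exact hX n).moduleCat_range_eq_ker
  rw [LinearMap.range_eq_top.2 h] at e2
  ext1
  exact LinearMap.ker_eq_top.1 e2.symm

lemma finrank_les (n : ℕ) [Module.Finite k X₁.V] 
    (h : ∀ n, groupCohomology.map (MonoidHom.id G) g n = 0) :
    Module.finrank k (groupCohomology X₁ (n+1)) = Module.finrank k (groupCohomology X₃ n)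
      + Module.finrank k (groupCohomology X₂ (n+1)) := by
  have := finite_H X₁ (n+1)
  have e1 : LinearMap.range (groupCohomology.δ hX n (n+1) rfl).hom =
    LinearMap.ker (groupCohomology.map (MonoidHom.id G) f (n+1)).hom := 
      (groupCohomology.mapShortComplex₁_exact hX rfl).moduleCat_range_eq_ker
  have e3 : LinearMap.range (groupCohomology.map (MonoidHom.id G) g n).hom =
    LinearMap.ker (groupCohomology.δ hX n (n+1) rfl).hom := 
      (groupCohomology.mapShortComplex₃_exact hX rfl).moduleCat_range_eq_ker
  rw [h] at e3
  have inj : Function.Injective (groupCohomology.δ hX n (n+1) rfl).hom := by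
    rw [← LinearMap.ker_eq_bot, ← e3]; simp
  have r := Submodule.finrank_quotient_add_finrank
    (LinearMap.ker (groupCohomology.map (MonoidHom.id G) f (n+1)).hom)
  rw [((groupCohomology.map (MonoidHom.id G) f (n+1)).hom.quotKerEquivOfSurjective
    (surj_of_zero hX (n+1) (h _))).finrank_eq, ← e1, LinearMap.finrank_range_of_inj inj] at r
  rw [← r, add_comm]

lemma finrank_les0 [Module.Finite k X₁.V] 
    (h : groupCohomology.map (MonoidHom.id G) g 0 = 0) :
    Module.finrank k (groupCohomology X₁ 0) = Module.finrank k (groupCohomology X₂ 0) := by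
  have := hX.mono_f
  have inj := (ModuleCat.mono_iff_injective (groupCohomology.map (MonoidHom.id G) f 0)).1
    inferInstance
  exact (LinearEquiv.ofBijective (groupCohomology.map (MonoidHom.id G) f 0).hom
    ⟨inj, surj_of_zero hX 0 h⟩).finrank_eq
end general

lemma zero_of_comp {k G : Type} [CommRing k] [Group G] {A B C : Rep.{0} k G} {f : A ⟶ B}
    {g : B ⟶ C} (w : f ≫ g = 0) (n : ℕ)
    (hs : Function.Surjective (groupCohomology.map (MonoidHom.id G) f n).hom) :
    groupCohomology.map (MonoidHom.id G) g n = 0 := by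
  have h : groupCohomology.map (MonoidHom.id G) f n ≫
      groupCohomology.map (MonoidHom.id G) g n = 0 := by
    rw [← groupCohomology.map_id_comp, w]
    exact (groupCohomology.functor k G n).map_zero _ _
  ext y
  obtain ⟨x, rfl⟩ := hs y
  exact congrArg (fun f => f.hom x) h

section reps
variable (p : ℕ) [Fact p.Prime] {G : Type} [Group G] (χ : G →* Multiplicative (ZMod p))

def Nρ : Representation (ZMod p) G (ZMod p → ZMod p) where
  toFun g := LinearMap.funLeft _ _ (fun x => x + (χ g).toAdd)
  map_one' := by ext; simp [LinearMap.funLeft]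
  map_mul' a b := by
    ext f x; simp [LinearMap.funLeft, add_assoc]

def sumL : (ZMod p → ZMod p) →ₗ[ZMod p] ZMod p := ∑ i, LinearMap.proj i

lemma sumL_apply (f) : sumL p f = ∑ i, f i := by simp [sumL]

lemma Nρ_apply (g : G) (f x) : Nρ p χ g f x = f (x + (χ g).toAdd) := rfl

lemma sumL_Nρ (g : G) (f) : sumL p (Nρ p χ g f) = sumL p f := by
  simp only [sumL_apply, Nρ_apply]
  exact Fintype.sum_equiv (Equiv.addRight _) _ _ (fun x => rfl)

def Qρ : Representation (ZMod p) G (LinearMap.ker (sumL p)) where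
  toFun g := (Nρ p χ g).restrict (fun f hf => by
    rw [LinearMap.mem_ker] at *; rw [sumL_Nρ, hf])
  map_one' := by ext; simp
  map_mul' a b := by ext f x; simp

abbrev T : Rep.{0} (ZMod p) G := Rep.trivial (ZMod p) G (ZMod p)
abbrev N : Rep.{0} (ZMod p) G := Rep.of (Nρ p χ)
abbrev Q : Rep.{0} (ZMod p) G := Rep.of (Qρ p χ)

def constL : ZMod p →ₗ[ZMod p] (ZMod p → ZMod p) := LinearMap.pi (fun _ => LinearMap.id)

def constH : T p ⟶ N p χ := Rep.ofHom ⟨constL p, fun g => by ext; rfl⟩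
def sumH : N p χ ⟶ T p := Rep.ofHom ⟨sumL p, fun g => by 
  refine LinearMap.ext fun f => sumL_Nρ p χ g f⟩

def DL : (ZMod p → ZMod p) →ₗ[ZMod p] (ZMod p → ZMod p) := 
  LinearMap.funLeft _ _ (fun x => x + 1) - LinearMap.id

lemma DL_apply (f x) : DL p f x = f (x+1) - f x := rfl

lemma sumL_DL (f) : sumL p (DL p f) = 0 := by
  simp only [sumL_apply, DL_apply, Finset.sum_sub_distrib, sub_eq_zero]
  exact Fintype.sum_equiv (Equiv.addRight _) _ _ (fun x => rfl)

def DL' : (ZMod p → ZMod p) →ₗ[ZMod p] LinearMap.ker (sumL p) :=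
  (DL p).codRestrict _ (fun f => LinearMap.mem_ker.2 (sumL_DL p f))

def DH : N p χ ⟶ Q p χ := Rep.ofHom ⟨DL' p, fun g => by 
  refine LinearMap.ext fun f => Subtype.ext (funext fun x => ?_)
  change Nρ p χ g f (x+1) - Nρ p χ g f x = DL p f (x + (χ g).toAdd)
  simp only [Nρ_apply, DL_apply]
  congr 2; ring⟩

def inclH : Q p χ ⟶ N p χ := Rep.ofHom ⟨Submodule.subtype _, fun g => rfl⟩

lemma ker_DL : LinearMap.ker (DL p) = LinearMap.range (constL p) := by
  apply le_antisymm
  · intro f hf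
    refine ⟨f 0, funext fun x => ?_⟩
    have h : ∀ x, f (x+1) = f x := fun x => by
      have := congrFun (LinearMap.mem_ker.1 hf) x
      rwa [DL_apply, Pi.zero_apply, sub_eq_zero] at this
    have h2 : ∀ n : ℕ, f n = f 0 := fun n => by
      induction n with
      | zero => simp
      | succ n ih => rw [Nat.cast_succ, h, ih]
    rw [← ZMod.natCast_zmod_val x, h2]; rfl
  · rintro _ ⟨c, rfl⟩
    exact funext fun x => sub_self c

lemma constL_inj : Function.Injective (constL p) := fun a b h => congrFun h 0

lemma sumL_surj : Function.Surjective (sumL p) := fun c =>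
  ⟨Pi.single 0 c, by simp [sumL_apply]⟩

lemma DL'_surj : Function.Surjective (DL' p) := by
  have hk : LinearMap.ker (DL' p) = LinearMap.range (constL p) := by
    rw [DL', LinearMap.ker_codRestrict, ker_DL]
  have h1 := (DL' p).finrank_range_add_finrank_ker
  have h2 := (sumL p).finrank_range_add_finrank_ker
  rw [hk, LinearMap.finrank_range_of_inj (constL_inj p)] at h1
  rw [LinearMap.range_eq_top.2 (sumL_surj p), finrank_top] at h2
  rw [← LinearMap.range_eq_top]
  apply Submodule.eq_top_of_finrank_eq
  omega

lemma shortExact_of {k G : Type} [CommRing k] [Group G] (X : ShortComplex (Rep.{0} k G))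
  (h1 : Function.Injective X.f.hom) (h2 : Function.Surjective X.g.hom)
  (h3 : LinearMap.ker X.g.hom.toLinearMap ≤ LinearMap.range X.f.hom.toLinearMap) : 
  X.ShortExact where
  exact := by
    have : (X.map (forget₂ (Rep k G) (ModuleCat k))).Exact := by
      rw [ShortComplex.moduleCat_exact_iff_ker_sub_range]
      exact h3
    exact (ShortComplex.exact_map_iff_of_faithful X (forget₂ (Rep k G) (ModuleCat k))).1 this
  mono_f := (Rep.mono_iff_injective _).2 h1
  epi_g := (Rep.epi_iff_surjective _).2 h2

lemma w1 : constH p χ ≫ DH p χ = 0 := by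
  refine ConcreteCategory.hom_ext _ _ fun x => ?_
  exact Subtype.ext (funext fun y => sub_self _)
lemma w2 : inclH p χ ≫ sumH p χ = 0 := by
  refine ConcreteCategory.hom_ext _ _ fun x => ?_
  exact x.2

lemma S1_exact : (ShortComplex.mk _ _ (w1 p χ)).ShortExact := shortExact_of _ (constL_inj p) (DL'_surj p) (by
  change LinearMap.ker (DL' p) ≤ LinearMap.range (constL p)
  rw [DL', LinearMap.ker_codRestrict, ker_DL])
lemma S2_exact : (ShortComplex.mk _ _ (w2 p χ)).ShortExact := shortExact_of _ Subtype.val_injective (sumL_surj p) (by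
  change LinearMap.ker (sumL p) ≤ LinearMap.range (Submodule.subtype _)
  simp)

lemma const_sum : constH p χ ≫ sumH p χ = 0 := by
  refine ConcreteCategory.hom_ext _ _ fun x => ?_
  change sumL p (constL p x) = 0
  simp [sumL_apply, constL]

def evH : Rep.res χ.ker.subtype (N p χ) ⟶ T p := Rep.ofHom ⟨LinearMap.proj 0, fun g => by
  refine LinearMap.ext fun f => ?_
  change f (0 + (χ g).toAdd) = f 0
  rw [g.2]; simp⟩

noncomputable def coindEquiv (hχ : Function.Surjective χ) :
    (Nρ p χ).Equiv (Representation.coind χ.ker.subtype (Representation.trivial (ZMod p) χ.ker (ZMod p))) := by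
  let F : (ZMod p → ZMod p) →ₗ[ZMod p] (Representation.coindV χ.ker.subtype (Representation.trivial (ZMod p) χ.ker (ZMod p))) :=
    (LinearMap.funLeft _ _ (fun g => (χ g).toAdd)).codRestrict _ (fun f g h => by
      have : χ g.1 = 1 := g.2
      simp [LinearMap.funLeft, this])
  have hF : Function.Bijective F := by
    constructor
    · intro a b h
      ext x
      obtain ⟨g, hg⟩ := hχ (Multiplicative.ofAdd x)
      have := congrFun (congrArg Subtype.val h) g
      change a (χ g).toAdd = b (χ g).toAdd at this
      rwa [hg] at this
    · rintro ⟨f, hf⟩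
      choose t ht using hχ
      refine ⟨fun x => f (t (Multiplicative.ofAdd x)), Subtype.ext (funext fun g => ?_)⟩
      change f (t (χ g)) = f g
      have := hf ⟨t (χ g) * g⁻¹, by simp [MonoidHom.mem_ker, ht]⟩ g
      simpa using this
  exact { LinearEquiv.ofBijective F hF with
    isIntertwining' := fun g => by
      refine LinearMap.ext fun f => Subtype.ext (funext fun x => ?_)
      change f ((χ x).toAdd + (χ g).toAdd) = f (χ (x * g)).toAdd
      simp }

lemma finrank_N (hχ : Function.Surjective χ) (n : ℕ) : 
    Module.finrank (ZMod p) (groupCohomology (N p χ) n) = 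
    Module.finrank (ZMod p) (groupCohomology (T (G := χ.ker) p) n) := 
  (((groupCohomology.functor (ZMod p) G n).mapIso (Rep.mkIso (coindEquiv p χ hχ))) ≪≫
    groupCohomology.coindIso (T (G := χ.ker) p) n).toLinearEquiv.finrank_eq

variable [Finite G]

def idH {G' : Type} [Group G'] (r : G →* G') : Rep.res r (T p) ⟶ T p :=
  Rep.ofHom ⟨LinearMap.id, fun g => rfl⟩

lemma res_comp (r : G →* χ.ker) (hr : ∀ h, r (χ.ker.subtype h) = h) (n : ℕ) :
    (groupCohomology.map r (A := T p) (B := T p) (idH p r) n ≫ 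
      groupCohomology.map (MonoidHom.id G) (A := T p) (B := N p χ) (constH p χ) n) ≫ 
      groupCohomology.map χ.ker.subtype (evH p χ) n = 𝟙 _ := by
  rw [← groupCohomology.map_comp, ← groupCohomology.map_comp, ← groupCohomology.map_id]
  apply groupCohomology.map_congr
  · ext h; exact congrArg Subtype.val (hr h)
  · rfl

lemma const_surj (hχ : Function.Surjective χ) (r : G →* χ.ker) 
    (hr : ∀ h, r (χ.ker.subtype h) = h) (n : ℕ) :
    Function.Surjective (groupCohomology.map (MonoidHom.id G) (A := T p) (B := N p χ) (constH p χ) n).hom := by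
  have hc := res_comp p χ r hr n
  set a := groupCohomology.map r (A := T p) (B := T p) (idH p r) n
  set b := groupCohomology.map (MonoidHom.id G) (A := T p) (B := N p χ) (constH p χ) n
  set c := groupCohomology.map χ.ker.subtype (evH p χ) n
  have hc' : ∀ x, c.hom (b.hom (a.hom x)) = x := fun x => congrArg (fun f => f.hom x) hc
  have i1 : Module.Finite (ZMod p) (N p χ).V :=
    inferInstanceAs (Module.Finite (ZMod p) (ZMod p → ZMod p))
  have i2 : Module.Finite (ZMod p) (T (G := χ.ker) p).V :=
    inferInstanceAs (Module.Finite (ZMod p) (ZMod p))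
  have := finite_H (N p χ) n
  have := finite_H (T (G := χ.ker) p) n
  have cs : Function.Surjective c.hom := fun x => ⟨_, hc' x⟩
  have ci := (LinearMap.injective_iff_surjective_of_finrank_eq_finrank (finrank_N p χ hχ n)).2 cs
  intro y
  exact ⟨a.hom (c.hom y), ci (hc' _)⟩

lemma rec_aux (hχ : Function.Surjective χ) (r : G →* χ.ker) 
    (hr : ∀ h, r (χ.ker.subtype h) = h) (n : ℕ) :
    Module.finrank (ZMod p) (groupCohomology (T (G := G) p) (n+1)) =
    Module.finrank (ZMod p) (groupCohomology (T (G := χ.ker) p) (n+1)) +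
    Module.finrank (ZMod p) (groupCohomology (T (G := G) p) n) := by
  have z1 : ∀ n, groupCohomology.map (MonoidHom.id G) (A := N p χ) (B := Q p χ) (DH p χ) n = 0 := fun n =>
    zero_of_surj (S1_exact p χ) n (const_surj p χ hχ r hr n)
  have z2 : ∀ n, groupCohomology.map (MonoidHom.id G) (A := N p χ) (B := T p) (sumH p χ) n = 0 := fun n => by
    exact zero_of_comp (const_sum p χ) n (const_surj p χ hχ r hr n)
  have f1 : ∀ n, Module.finrank (ZMod p) (groupCohomology (T (G := G) p) (n+1)) = 
      Module.finrank (ZMod p) (groupCohomology (Q p χ) n) +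
      Module.finrank (ZMod p) (groupCohomology (N p χ) (n+1)) := fun n => by
    have : Module.Finite (ZMod p) (T (G := G) p).V := 
      inferInstanceAs (Module.Finite (ZMod p) (ZMod p))
    exact finrank_les (S1_exact p χ) n z1
  have i2 : Module.Finite (ZMod p) (Q p χ).V := 
      FiniteDimensional.finiteDimensional_submodule (LinearMap.ker (sumL p))
  have f2 : ∀ n, Module.finrank (ZMod p) (groupCohomology (Q p χ) (n+1)) = 
      Module.finrank (ZMod p) (groupCohomology (T (G := G) p) n) +
      Module.finrank (ZMod p) (groupCohomology (N p χ) (n+1)) := fun n => 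
    finrank_les (S2_exact p χ) n z2
  have f0 : Module.finrank (ZMod p) (groupCohomology (Q p χ) 0) =
      Module.finrank (ZMod p) (groupCohomology (N p χ) 0) := 
    finrank_les0 (S2_exact p χ) (z2 0)
  have g0 : Module.finrank (ZMod p) (groupCohomology (T (G := G) p) 0) = 1 :=
    (groupCohomology.H0IsoOfIsTrivial (T (G := G) p)).toLinearEquiv.finrank_eq.trans
      (Module.finrank_self _)
  have g0' : Module.finrank (ZMod p) (groupCohomology (T (G := χ.ker) p) 0) = 1 :=
    (groupCohomology.H0IsoOfIsTrivial (T (G := χ.ker) p)).toLinearEquiv.finrank_eq.trans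
      (Module.finrank_self _)
  rw [← finrank_N p χ hχ] at g0' ⊢
  induction n with
  | zero => have := f1 0; omega
  | succ n ih => have := f1 (n+1); have := f1 n; have := f2 n; omega
end reps

section final
variable (p : ℕ) [Fact p.Prime]

def chi (s : ℕ) : Multiplicative (Fin (s+1) → ZMod p) →* Multiplicative (ZMod p) :=
  AddMonoidHom.toMultiplicative (Pi.evalAddMonoidHom _ 0)

lemma chi_apply (s : ℕ) (g) : chi p s g = Multiplicative.ofAdd (g.toAdd 0) := rfl

def kerEquiv (s : ℕ) : (chi p s).ker ≃* Multiplicative (Fin s → ZMod p) where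
  toFun g := Multiplicative.ofAdd (fun i => g.1.toAdd i.succ)
  invFun f := ⟨Multiplicative.ofAdd (Fin.cons 0 f.toAdd), rfl⟩
  left_inv g := by
    apply Subtype.ext
    apply Multiplicative.toAdd.injective
    have h : g.1.toAdd 0 = 0 := g.2
    funext i
    refine Fin.cases ?_ (fun i => ?_) i
    · exact h.symm
    · simp
  right_inv f := by
    apply Multiplicative.toAdd.injective
    funext i
    simp
  map_mul' a b := rfl

def retr (s : ℕ) : Multiplicative (Fin (s+1) → ZMod p) →* (chi p s).ker :=
  (kerEquiv p s).symm.toMonoidHom.comp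
    { toFun := fun g => Multiplicative.ofAdd (fun i => g.toAdd i.succ)
      map_one' := rfl
      map_mul' := fun a b => rfl }

lemma retr_sub (s : ℕ) (h) : retr p s ((chi p s).ker.subtype h) = h := 
  (kerEquiv p s).symm_apply_apply h

lemma rec_fin (s n : ℕ) :
    Module.finrank (ZMod p) (groupCohomology (T (G := Multiplicative (Fin (s+1) → ZMod p)) p) (n+1)) =
    Module.finrank (ZMod p) (groupCohomology (T (G := Multiplicative (Fin s → ZMod p)) p) (n+1)) +
    Module.finrank (ZMod p) (groupCohomology (T (G := Multiplicative (Fin (s+1) → ZMod p)) p) n) := by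
  rw [rec_aux p (chi p s) (fun c => ⟨Multiplicative.ofAdd (fun _ => c.toAdd), rfl⟩) (retr p s)
    (retr_sub p s)]
  congr 1
  exact (groupCohomology.mapIso (A := T p) (B := T p) (kerEquiv p s) (LinearEquiv.refl (ZMod p) (ZMod p)) 
    (fun g => rfl) (n+1)).toLinearEquiv.finrank_eq

lemma main (s n : ℕ) :
    Module.finrank (ZMod p) (groupCohomology (T (G := Multiplicative (Fin (s+1) → ZMod p)) p) n) =
      (n + s).choose s := by
  have g0 (s : ℕ) : Module.finrank (ZMod p)
      (groupCohomology (T (G := Multiplicative (Fin s → ZMod p)) p) 0) = 1 :=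
    (groupCohomology.H0IsoOfIsTrivial
      (T (G := Multiplicative (Fin s → ZMod p)) p)).toLinearEquiv.finrank_eq.trans
      (Module.finrank_self _)
  induction s generalizing n with
  | zero =>
    induction n with
    | zero => simpa using g0 1
    | succ n ih =>
      rw [rec_fin, ih]
      have : Subsingleton (Multiplicative (Fin 0 → ZMod p)) :=
        inferInstanceAs (Subsingleton (Fin 0 → ZMod p))
      have h0 := isZero_groupCohomology_succ_of_subsingleton
        (T (G := Multiplicative (Fin 0 → ZMod p)) p) n
      have := ModuleCat.subsingleton_of_isZero h0
      rw [Module.finrank_zero_of_subsingleton]; simp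
  | succ s ihs =>
    induction n with
    | zero => simpa using g0 (s+2)
    | succ n ih =>
      rw [rec_fin, ih, ihs, show n + 1 + (s+1) = (n+1+s)+1 by ring, Nat.choose_succ_succ,
        show n + (s+1) = n+1+s by ring]
end final
end ElemAb

/-- For `G = (ℤ/pℤ)^s` acting trivially on `𝔽_p`, the cohomology `Hⁿ(G, 𝔽_p)` is an
`𝔽_p`-vector space of dimension `C(n + s - 1, s - 1)`. -/
theorem finrank_groupCohomology_elementaryAbelian (p s n : ℕ) [Fact p.Prime] (hs : 1 ≤ s) :
    Module.finrank (ZMod p)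
      (groupCohomology (Rep.trivial (ZMod p) (Multiplicative (Fin s → ZMod p)) (ZMod p)) n)
      = (n + s - 1).choose (s - 1) := by
  obtain ⟨s, rfl⟩ := Nat.exists_eq_add_of_le' hs
  exact ElemAb.main p s n
end

section
/- Let G = C₂ × C₂ be the Klein four-group acting trivially on 𝔽₂. Then for every n ≥ 0, Hⁿ(G, 𝔽₂) is an 𝔽₂-vector space of dimension n + 1. -/
/-- The Klein four-group `C₂ × C₂`. -/
abbrev Klein : Type := Multiplicative (ZMod 2 × ZMod 2)

open CategoryTheory
namespace KleinAux

abbrev F := ZMod 2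

def S : Subgroup Klein := (AddMonoidHom.snd (ZMod 2) (ZMod 2)).toMultiplicative.ker

instance : DecidablePred (· ∈ S) := fun g => decidable_of_iff (g.toAdd.2 = 0) Iff.rfl

def gen : S := ⟨Multiplicative.ofAdd (1, 0), rfl⟩

lemma hgen : ∀ x : S, x ∈ Subgroup.zpowers gen := by
  rintro ⟨⟨a, b⟩, (h : b = 0)⟩
  subst h
  fin_cases a
  · exact ⟨0, rfl⟩
  · exact ⟨1, rfl⟩

abbrev kS : Rep F S := Rep.trivial F S F
abbrev kG : Rep F Klein := Rep.trivial F Klein F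

lemma card_S : Fintype.card S = 2 := by decide

lemma normz : (kS.norm).hom.toLinearMap = 0 := by
  ext
  simp [Rep.norm, Representation.norm, card_S]
  decide
lemma subz : (Rep.applyAsHom kS gen - 𝟙 kS).hom.toLinearMap = 0 := by
  ext
  exact sub_self (1 : F)

lemma homology_of_zero (T : ShortComplex (ModuleCat F)) (hf : T.f = 0) (hg : T.g = 0) :
    Nonempty (T.homology ≅ T.X₂) :=
  ⟨(ShortComplex.HomologyData.ofZeros T hf hg).left.homologyIso⟩

lemma rank_S (n : ℕ) : Module.rank F (groupCohomology kS n) = 1 := by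
  have key : Nonempty (groupCohomology kS n ≅ ModuleCat.of F F) := by
    rcases Nat.eq_zero_or_pos n with rfl | hn
    · exact ⟨groupCohomology.H0IsoOfIsTrivial kS⟩
    · rcases Nat.even_or_odd n with h | h
      · have : NeZero n := ⟨hn.ne'⟩
        obtain ⟨e⟩ := homology_of_zero (Rep.FiniteCyclicGroup.normHomCompSub kS gen)
          (by ext1; exact normz) (by ext1; exact subz)
        exact ⟨Rep.FiniteCyclicGroup.groupCohomologyIsoEven kS gen hgen n h ≪≫ e⟩
      · obtain ⟨e⟩ := homology_of_zero (Rep.FiniteCyclicGroup.subCompNormHom kS gen)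
          (by ext1; exact subz) (by ext1; exact normz)
        exact ⟨Rep.FiniteCyclicGroup.groupCohomologyIsoOdd kS gen hgen n h ≪≫ e⟩
  obtain ⟨e⟩ := key
  rw [e.toLinearEquiv.rank_eq]
  exact Module.rank_self F

noncomputable abbrev C : Rep F Klein := Rep.coind S.subtype kS

noncomputable def ι : kG ⟶ C := Rep.ofHom
  { toFun := fun a => ⟨fun _ => a, fun _ _ => rfl⟩
    map_add' := fun _ _ => rfl
    map_smul' := fun _ _ => rfl
    isIntertwining' := fun _ => rfl }

def t : Klein := Multiplicative.ofAdd (0, 1)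

lemma C_eq (f : C) (g : Klein) : f.1 g = if g.toAdd.2 = 0 then f.1 1 else f.1 t := by
  obtain ⟨a, b⟩ := g
  have h0 := f.2 ⟨Multiplicative.ofAdd (a, 0), rfl⟩ 1
  have h1 := f.2 ⟨Multiplicative.ofAdd (a, 0), rfl⟩ t
  fin_cases b
  · simp 
    refine Eq.trans ?_ h0
    exact congrArg f.1 (mul_one (M := Klein) _).symm
  · simp 
    refine Eq.trans ?_ h1
    congr 1
    fin_cases a <;> rfl

noncomputable def p : C ⟶ kG := Rep.ofHom
  { toFun := fun f => f.1 1 + f.1 t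
    map_add' := fun f g => add_add_add_comm _ _ _ _
    map_smul' := fun c f => (mul_add c _ _).symm
    isIntertwining' := fun g => by
      ext f
      change f.1 (1 * g) + f.1 (t * g) = f.1 1 + f.1 t
      rw [C_eq f (1 * g), C_eq f (t * g)]
      obtain ⟨a, b⟩ := g
      fin_cases b
      · rfl
      · exact add_comm _ _ }

lemma ιp : ι ≫ p = 0 := by
  ext
  exact CharTwo.add_self_eq_zero (1 : F)

noncomputable abbrev X : ShortComplex (Rep F Klein) := ⟨ι, p, ιp⟩

lemma hX : X.ShortExact where
  exact := by
    rw [← ShortComplex.exact_map_iff_of_faithful X (forget₂ (Rep F Klein) (ModuleCat F)),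
      ShortComplex.moduleCat_exact_iff]
    intro f hf
    change C at f
    change f.1 1 + f.1 t = 0 at hf
    refine ⟨f.1 1, Subtype.ext (funext fun g => ?_)⟩
    change f.1 1 = f.1 g
    rw [C_eq f g, ← CharTwo.add_eq_zero.1 hf]
    simp
  mono_f := (Rep.mono_iff_injective _).2 fun a b h => congrFun (congrArg Subtype.val h) 1
  epi_g := (Rep.epi_iff_surjective _).2 fun a => by
    refine ⟨⟨fun g => if g.toAdd.2 = 0 then a else 0, ?_⟩, ?_⟩
    · rintro ⟨⟨x, y⟩, (h : y = 0)⟩ ⟨z, w⟩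
      subst h
      change (if (0 + w) = 0 then a else 0) = if w = 0 then a else 0
      rw [zero_add]
    · exact add_zero a

def r : Klein →* S where
  toFun g := ⟨Multiplicative.ofAdd (g.toAdd.1, 0), rfl⟩
  map_one' := rfl
  map_mul' a b := Subtype.ext (by
    change Multiplicative.ofAdd _ = Multiplicative.ofAdd (_ : ZMod 2 × ZMod 2)
    simp)

noncomputable def infl : Rep.res r kS ⟶ kG := Rep.ofHom
  { toFun := fun a => a
    map_add' := fun _ _ => rfl
    map_smul' := fun _ _ => rfl
    isIntertwining' := fun _ => rfl }

noncomputable def ev : Rep.res S.subtype C ⟶ kS := Rep.ofHom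
  { toFun := fun f => f.1 1
    map_add' := fun _ _ => rfl
    map_smul' := fun _ _ => rfl
    isIntertwining' := fun g => by
      ext f
      change f.1 (1 * g.1) = f.1 1
      rw [C_eq f]
      have : (Multiplicative.toAdd (1 * g.1)).2 = 0 := by rw [one_mul]; exact g.2
      rw [if_pos this] }

open groupCohomology in
lemma comp_id (n : ℕ) :
    map r infl n ≫ map (A := kG) (B := C) (MonoidHom.id Klein) ι n ≫ map S.subtype ev n = 𝟙 (groupCohomology kS n) := by
  rw [← map_comp, ← map_comp, ← groupCohomology.map_id]
  refine map_congr ?_ ?_ n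
  · refine MonoidHom.ext ?_
    rintro ⟨⟨a, b⟩, (h : b = 0)⟩
    subst h
    rfl
  · rfl

lemma surj (n : ℕ) : Function.Surjective (groupCohomology.map (A := kG) (B := C) (MonoidHom.id Klein) ι n).hom := by
  have hrS := rank_S n
  have hrC : Module.rank F (groupCohomology C n) = 1 := by
    rw [(groupCohomology.coindIso kS n).toLinearEquiv.rank_eq, hrS]
  have : Module.Finite F (groupCohomology kS n) := Module.rank_lt_aleph0_iff.1 (by simp [hrS])
  have : Module.Finite F (groupCohomology C n) := Module.rank_lt_aleph0_iff.1 (by simp [hrC])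
  let q := (groupCohomology.map r infl n ≫ groupCohomology.map (A := kG) (B := C) (MonoidHom.id Klein) ι n).hom
  have hinj : Function.Injective q := by
    apply Function.LeftInverse.injective (g := (groupCohomology.map S.subtype ev n).hom)
    intro x
    exact congrArg (fun f => f.hom x) (comp_id n)
  have hs : Function.Surjective q := (LinearMap.injective_iff_surjective_of_finrank_eq_finrank
    (by simp [Module.finrank, hrS, hrC])).1 hinj
  intro y
  obtain ⟨x, hx⟩ := hs y
  exact ⟨_, hx⟩

lemma rank_G (n : ℕ) : Module.rank F (groupCohomology kG n) = ((n + 1 : ℕ) : Cardinal) := by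
  induction n with
  | zero =>
    rw [(groupCohomology.H0IsoOfIsTrivial kG).toLinearEquiv.rank_eq]
    simp
  | succ n ih =>
    have e2 := (ShortComplex.moduleCat_exact_iff _).1 (groupCohomology.mapShortComplex₂_exact hX n)
    have e3 := (ShortComplex.moduleCat_exact_iff _).1
      (groupCohomology.mapShortComplex₃_exact hX (rfl : n + 1 = n + 1))
    have e1 := ShortComplex.Exact.moduleCat_range_eq_ker
      (groupCohomology.mapShortComplex₁_exact hX (rfl : n + 1 = n + 1))
    let d := (groupCohomology.δ hX n (n+1) rfl).hom
    let i := (groupCohomology.map (A := kG) (B := C) (MonoidHom.id Klein) ι (n+1)).hom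
    have e1' : LinearMap.range d = LinearMap.ker i := e1
    have hd : Function.Injective d := by
      rw [injective_iff_map_eq_zero]
      intro x hx
      obtain ⟨y, hy⟩ := e3 x hx
      obtain ⟨z, hz⟩ := surj n y
      have hw : (groupCohomology.map (A := kG) (B := C) (MonoidHom.id Klein) ι n ≫
          groupCohomology.map (A := C) (B := kG) (MonoidHom.id Klein) p n) = 0 := 
        (groupCohomology.mapShortComplex₂ X n).zero
      have := congrArg (fun f => f.hom z) hw
      rw [← hy, ← hz]
      exact this
    have h := LinearMap.rank_range_add_rank_ker i
    rw [← e1', (LinearMap.range_eq_top.2 (surj (n+1))), rank_top, rank_range_of_injective d hd] at h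
    have hrC : Module.rank F (groupCohomology C (n+1)) = 1 := by
      rw [(groupCohomology.coindIso kS (n+1)).toLinearEquiv.rank_eq, rank_S]
    rw [← h]
    change Module.rank F (groupCohomology C (n+1)) + Module.rank F (groupCohomology kG n) = _
    rw [hrC, ih]
    push_cast
    ring

end KleinAux

/-- Hⁿ(C₂ × C₂, 𝔽₂) is an `𝔽₂`-vector space of dimension `n + 1`. -/
theorem finrank_groupCohomology_klein (n : ℕ) :
    Module.finrank (ZMod 2)
      (groupCohomology (Rep.trivial (ZMod 2) Klein (ZMod 2)) n) = n + 1 := by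
  have := KleinAux.rank_G n
  exact Module.finrank_eq_of_rank_eq this
end
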